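/- Let 𝒴 be a Polish space, r ∈ [1,∞), and let F : 𝒫_r(𝒴) → ℝ ∪ {+∞} be convex and lower semicontinuous (with respect to 𝒲_r). Then F(I(Q)) ≤ ∫ F(q) Q(dq) for every Q ∈ 𝒫_r(𝒫_r(𝒴)). -/

import Mathlib

open MeasureTheory Set Filter
open scoped ENNReal NNReal Topology RealInnerProductSpace

noncomputable section

namespace WOT

/-- The set of couplings of `μ` and `ν`. -/
def Couplings {X Y : Type*} [MeasurableSpace X] [MeasurableSpace Y]
    (μ : Measure X) (ν : Measure Y) : Set (Measure (X × Y)) :=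
  {π | π.map Prod.fst = μ ∧ π.map Prod.snd = ν}

/-- `K` is a disintegration of `π` with respect to its first marginal `μ`. -/
def IsDisint {X Y : Type*} [MeasurableSpace X] [MeasurableSpace Y]
    (π : Measure (X × Y)) (μ : Measure X) (K : X → Measure Y) : Prop :=
  Measurable K ∧ (∀ x, IsProbabilityMeasure (K x)) ∧
    ∀ s : Set (X × Y), MeasurableSet s → π s = ∫⁻ x, K x (Prod.mk x ⁻¹' s) ∂μ

/-- The intensity `I(Q)` of a measure on measures. -/
def intensity {Y : Type*} [MeasurableSpace Y] (Q : Measure (Measure Y)) : Measure Y :=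
  Q.join

/-- The intensity map `Î`. -/
def intensityHat {X Y : Type*} [MeasurableSpace X] [MeasurableSpace Y]
    (P : Measure (X × Measure Y)) : Measure (X × Y) :=
  P.bind fun xp => (Measure.dirac xp.1).prod xp.2

/-- `Λ(μ,ν)`, the set of probability measures on `X × 𝒫(Y)` whose intensity is a coupling. -/
def Lambda {X Y : Type*} [MeasurableSpace X] [MeasurableSpace Y]
    (μ : Measure X) (ν : Measure Y) : Set (Measure (X × Measure Y)) :=
  {P | IsProbabilityMeasure P ∧ (∀ᵐ xp ∂P, IsProbabilityMeasure xp.2) ∧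
    intensityHat P ∈ Couplings μ ν}

/-- Finite `r`-th moment. -/
def FinMom {X : Type*} [MeasurableSpace X] [PseudoMetricSpace X]
    (r : ℝ) (x₀ : X) (μ : Measure X) : Prop :=
  ∫⁻ x, ENNReal.ofReal (dist x x₀ ^ r) ∂μ < ⊤

/-- The growth class `Φ_r`. -/
def PhiR {X : Type*} [PseudoMetricSpace X] (r : ℝ) (x₀ : X) : Set (X → ℝ) :=
  {φ | Continuous φ ∧ ∃ K : ℝ, ∀ x, |φ x| ≤ K * (1 + dist x x₀ ^ r)}

/-- The `r`-Wasserstein distance (valued in `ℝ≥0∞`). -/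
def Wr {Y : Type*} [MeasurableSpace Y] [PseudoMetricSpace Y]
    (r : ℝ) (p q : Measure Y) : ℝ≥0∞ :=
  ⨅ π ∈ Couplings p q, (∫⁻ z : Y × Y, ENNReal.ofReal (dist z.1 z.2 ^ r) ∂π) ^ (1 / r)

/-- `𝒫_r(Y)`: probability measures with finite `r`-th moment. -/
def Pr {Y : Type*} [MeasurableSpace Y] [PseudoMetricSpace Y] (r : ℝ) (y₀ : Y) :
    Set (Measure Y) :=
  {p | IsProbabilityMeasure p ∧ FinMom r y₀ p}

/-- `𝒫_r(𝒫_r(Y))`: probability measures on `𝒫_r(Y)` with finite `r`-th moment w.r.t. `𝒲_r`. -/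
def PrP {Y : Type*} [MeasurableSpace Y] [PseudoMetricSpace Y] (r : ℝ) (y₀ : Y) :
    Set (Measure (Measure Y)) :=
  {Q | IsProbabilityMeasure Q ∧ (∀ᵐ p ∂Q, p ∈ Pr r y₀) ∧
    ∫⁻ p, Wr r p (Measure.dirac y₀) ^ r ∂Q < ⊤}

/-- The positive part of an extended real, valued in `ℝ≥0∞`. -/
def epos (e : EReal) : ℝ≥0∞ := if e = ⊤ then ⊤ else ENNReal.ofReal e.toReal

/-- Extended-real integral: positive part minus negative part (with value `⊥` when
both parts are infinite, i.e. when the integral is not well-defined). -/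
def eInt {X : Type*} [MeasurableSpace X] (f : X → EReal) (μ : Measure X) : EReal :=
  ((∫⁻ x, epos (f x) ∂μ : ℝ≥0∞) : EReal) - ((∫⁻ x, epos (-(f x)) ∂μ : ℝ≥0∞) : EReal)

/-- Extended-real integral with the opposite (`⊤`) convention for ill-defined integrals. -/
def eIntU {X : Type*} [MeasurableSpace X] (f : X → EReal) (μ : Measure X) : EReal :=
  -eInt (fun x => -(f x)) μ

/-- The extended-real integral is well-defined. -/
def eIntWellDef {X : Type*} [MeasurableSpace X] (f : X → EReal) (μ : Measure X) : Prop :=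
  (∫⁻ x, epos (f x) ∂μ ≠ ⊤) ∨ (∫⁻ x, epos (-(f x)) ∂μ ≠ ⊤)

/-- Convergence in the `r`-Wasserstein distance. -/
def WrTendsto {Y : Type*} [MeasurableSpace Y] [PseudoMetricSpace Y]
    (r : ℝ) (ps : ℕ → Measure Y) (p : Measure Y) : Prop :=
  Tendsto (fun n => Wr r (ps n) p) atTop (nhds 0)

/-- (Sequential) lower semicontinuity on `𝒫_r(Y)` w.r.t. `𝒲_r`. -/
def LscWr1 {Y : Type*} [MeasurableSpace Y] [PseudoMetricSpace Y]
    (r : ℝ) (y₀ : Y) (G : Measure Y → EReal) : Prop :=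
  ∀ (p : Measure Y) (ps : ℕ → Measure Y), p ∈ Pr r y₀ → (∀ n, ps n ∈ Pr r y₀) →
    WrTendsto r ps p → G p ≤ liminf (fun n => G (ps n)) atTop

/-- (Sequential) upper semicontinuity on `𝒫_r(Y)` w.r.t. `𝒲_r`. -/
def UscWr1 {Y : Type*} [MeasurableSpace Y] [PseudoMetricSpace Y]
    (r : ℝ) (y₀ : Y) (G : Measure Y → EReal) : Prop :=
  ∀ (p : Measure Y) (ps : ℕ → Measure Y), p ∈ Pr r y₀ → (∀ n, ps n ∈ Pr r y₀) →
    WrTendsto r ps p → limsup (fun n => G (ps n)) atTop ≤ G p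

/-- (Sequential) lower semicontinuity on `X × 𝒫_r(Y)` w.r.t. `d_X × 𝒲_r`. -/
def LscWr {X Y : Type*} [TopologicalSpace X] [MeasurableSpace Y] [PseudoMetricSpace Y]
    (r : ℝ) (y₀ : Y) (C : X × Measure Y → EReal) : Prop :=
  ∀ (x : X) (xs : ℕ → X) (p : Measure Y) (ps : ℕ → Measure Y),
    p ∈ Pr r y₀ → (∀ n, ps n ∈ Pr r y₀) → Tendsto xs atTop (nhds x) → WrTendsto r ps p →
    C (x, p) ≤ liminf (fun n => C (xs n, ps n)) atTop

/-- (Sequential) continuity of a real-valued cost on `X × 𝒫_r(Y)` w.r.t. `d_X × 𝒲_r`. -/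
def ContWr {X Y : Type*} [TopologicalSpace X] [MeasurableSpace Y] [PseudoMetricSpace Y]
    (r : ℝ) (y₀ : Y) (C : X × Measure Y → ℝ) : Prop :=
  ∀ (x : X) (xs : ℕ → X) (p : Measure Y) (ps : ℕ → Measure Y),
    p ∈ Pr r y₀ → (∀ n, ps n ∈ Pr r y₀) → Tendsto xs atTop (nhds x) → WrTendsto r ps p →
    Tendsto (fun n => C (xs n, ps n)) atTop (nhds (C (x, p)))

/-- Convexity of an extended-real-valued function on a set of measures. -/
def EConvexOn {Y : Type*} [MeasurableSpace Y] (S : Set (Measure Y)) (G : Measure Y → EReal) :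
    Prop :=
  ∀ p ∈ S, ∀ q ∈ S, ∀ t : ℝ≥0, t ≤ 1 →
    G ((t : ℝ≥0∞) • p + ((1 - t : ℝ≥0) : ℝ≥0∞) • q)
      ≤ ((t : ℝ) : EReal) * G p + (((1 - t : ℝ≥0) : ℝ) : EReal) * G q

/-- The lower semicontinuous convex envelope (on `𝒫_r(Y)` w.r.t. `𝒲_r`). -/
def cvxEnvWr {Y : Type*} [MeasurableSpace Y] [PseudoMetricSpace Y]
    (r : ℝ) (y₀ : Y) (f : Measure Y → EReal) : Measure Y → EReal :=
  fun p => ⨆ G ∈ {G : Measure Y → EReal |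
    LscWr1 r y₀ G ∧ EConvexOn (Pr r y₀) G ∧ ∀ q ∈ Pr r y₀, G q ≤ f q}, G p

/-- The cost `C̃(x,p) = inf {∫ C(x,q) Q(dq) : Q ∈ 𝒫_r(𝒫_r(Y)), I(Q) = p}`. -/
def tildeC {X Y : Type*} [MeasurableSpace X] [MeasurableSpace Y] [PseudoMetricSpace Y]
    (r : ℝ) (y₀ : Y) (C : X × Measure Y → EReal) : X × Measure Y → EReal :=
  fun xp => ⨅ Q ∈ {Q | Q ∈ PrP r y₀ ∧ intensity Q = xp.2}, eInt (fun q => C (xp.1, q)) Q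

/-- The barycenter of a measure on a normed space. -/
def bary {E : Type*} [NormedAddCommGroup E] [NormedSpace ℝ E] [MeasurableSpace E]
    (p : Measure E) : E :=
  ∫ y, y ∂p

/-- Convex order of measures. -/
def ConvexOrder {E : Type*} [NormedAddCommGroup E] [NormedSpace ℝ E] [MeasurableSpace E]
    (ν' ν : Measure E) : Prop :=
  ∀ θ : E → ℝ, ConvexOn ℝ Set.univ θ →
    eInt (fun y => ((θ y : ℝ) : EReal)) ν' ≤ eInt (fun y => ((θ y : ℝ) : EReal)) ν

/-- The inf-convolution `R_C ψ`. -/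
def RC {X Y : Type*} [MeasurableSpace Y] [PseudoMetricSpace Y]
    (r : ℝ) (y₀ : Y) (C : X × Measure Y → EReal) (ψ : Y → ℝ) : X → EReal :=
  fun x => ⨅ p ∈ Pr r y₀, (((-∫ y, ψ y ∂p : ℝ) : EReal) + C (x, p))

/-- `κ` is a regular conditional distribution of `Yv` given the sub-σ-algebra `m1`. -/
def IsRCD {Ω Y : Type*} [MeasurableSpace Y] (m1 : MeasurableSpace Ω)
    (mΩ : MeasurableSpace Ω) (P : @Measure Ω mΩ) (Yv : Ω → Y) (κ : Ω → Measure Y) : Prop :=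
  (∀ ω, IsProbabilityMeasure (κ ω)) ∧ Measurable[m1] κ ∧
    ∀ A : Set Y, MeasurableSet A → ∀ B : Set Ω, MeasurableSet[m1] B →
      P (B ∩ Yv ⁻¹' A) = ∫⁻ ω in B, κ ω A ∂P

end WOT

open WOT

/-!
Integration embeds `𝒫_r(Y)` in the algebraic dual of the space of measurable functions of
`r`-growth, and so induces on it a weak topology. This topology is at least as fine as that of
`𝒲_r`: all but a small part of the `r`-th moment of `p₀` lives on finitely many small cells, and a
measure `p` with nearly the same masses on these cells and nearly the same moment outside them can
be matched with `p₀` cell by cell at small cost. Hence `F` is lower semicontinuous for the weak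
topology, and the Hahn–Banach theorem applied to its epigraph gives, for each `c < F(I(Q))`, a
function `φ` of `r`-growth with `∫ φ dp ≤ F(p)` for all `p` and `c < ∫ φ dI(Q)`. Therefore
`c < ∫ φ dI(Q) = ∫∫ φ dp Q(dp) ≤ ∫ F dQ`.
-/

namespace WOT

section ExtendedIntegral

variable {X : Type*} [MeasurableSpace X] {μ : Measure X}

lemma epos_mono : Monotone epos := fun _ _ => EReal.toENNReal_le_toENNReal

lemma epos_coe (x : ℝ) : epos (x : EReal) = ENNReal.ofReal x :=
  EReal.toENNReal_of_ne_top (EReal.coe_ne_top x)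

lemma eInt_mono_ae {f g : X → EReal} (h : ∀ᵐ x ∂μ, f x ≤ g x) : eInt f μ ≤ eInt g μ := by
  refine EReal.sub_le_sub (mod_cast lintegral_mono_ae ?_) (mod_cast lintegral_mono_ae ?_)
  · filter_upwards [h] with x hx using epos_mono hx
  · filter_upwards [h] with x hx using epos_mono (EReal.neg_le_neg_iff.2 hx)

lemma eInt_coe {g : X → ℝ} (hg : Integrable g μ) :
    eInt (fun x => (g x : EReal)) μ = ((∫ x, g x ∂μ : ℝ) : EReal) := by
  have hpos : ∫⁻ x, ENNReal.ofReal (g x) ∂μ ≠ ⊤ := hg.lintegral_lt_top.ne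
  have hneg : ∫⁻ x, ENNReal.ofReal (-g x) ∂μ ≠ ⊤ := hg.neg.lintegral_lt_top.ne
  simp only [eInt, ← EReal.coe_neg, epos_coe]
  rw [integral_eq_lintegral_pos_part_sub_lintegral_neg_part hg, EReal.coe_sub,
    EReal.coe_ennreal_toReal hpos, EReal.coe_ennreal_toReal hneg]

end ExtendedIntegral

section Join

variable {Y : Type*} [MeasurableSpace Y] {Q : Measure (Measure Y)} {φ : Y → ℝ}

lemma ae_integrable_of_integrable_join (hφ : Measurable φ) (h : Integrable φ Q.join) :
    ∀ᵐ p ∂Q, Integrable φ p := by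
  have hfin : ∫⁻ p, ∫⁻ x, ‖φ x‖ₑ ∂p ∂Q ≠ ⊤ := by
    rw [← Measure.lintegral_join hφ.enorm.aemeasurable]
    exact h.2.ne
  filter_upwards [ae_lt_top (Measure.measurable_lintegral hφ.enorm) hfin] with p hp
  exact ⟨hφ.aestronglyMeasurable, hp⟩

lemma integrable_toReal_lintegral_ofReal (hφ : Measurable φ) (h : Integrable φ Q.join) :
    Integrable (fun p => (∫⁻ x, ENNReal.ofReal (φ x) ∂p).toReal) Q := by
  refine integrable_toReal_of_lintegral_ne_top
    (Measure.measurable_lintegral hφ.ennreal_ofReal).aemeasurable ?_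
  rw [← Measure.lintegral_join hφ.ennreal_ofReal.aemeasurable]
  exact h.lintegral_lt_top.ne

lemma integral_toReal_lintegral_ofReal (hφ : Measurable φ) (h : Integrable φ Q.join) :
    ∫ p, (∫⁻ x, ENNReal.ofReal (φ x) ∂p).toReal ∂Q =
      (∫⁻ x, ENNReal.ofReal (φ x) ∂Q.join).toReal := by
  have hm := Measure.measurable_lintegral hφ.ennreal_ofReal
  have hjoin := Measure.lintegral_join (m := Q) hφ.ennreal_ofReal.aemeasurable
  rw [integral_toReal hm.aemeasurable (ae_lt_top hm (hjoin ▸ h.lintegral_lt_top.ne)), hjoin]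

lemma integral_ae_eq_toReal_sub_toReal (hφ : Measurable φ) (h : Integrable φ Q.join) :
    (fun p => ∫ x, φ x ∂p) =ᵐ[Q] fun p => (∫⁻ x, ENNReal.ofReal (φ x) ∂p).toReal -
      (∫⁻ x, ENNReal.ofReal (-φ x) ∂p).toReal := by
  filter_upwards [ae_integrable_of_integrable_join hφ h] with p hp
  exact integral_eq_lintegral_pos_part_sub_lintegral_neg_part hp

lemma integrable_integral_of_integrable_join (hφ : Measurable φ) (h : Integrable φ Q.join) :
    Integrable (fun p => ∫ x, φ x ∂p) Q :=
  ((integrable_toReal_lintegral_ofReal hφ h).sub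
    (integrable_toReal_lintegral_ofReal hφ.neg h.neg)).congr
    (integral_ae_eq_toReal_sub_toReal hφ h).symm

lemma integral_join (hφ : Measurable φ) (h : Integrable φ Q.join) :
    ∫ x, φ x ∂Q.join = ∫ p, ∫ x, φ x ∂p ∂Q := by
  rw [integral_congr_ae (integral_ae_eq_toReal_sub_toReal hφ h),
    integral_sub (integrable_toReal_lintegral_ofReal hφ h)
      (integrable_toReal_lintegral_ofReal hφ.fun_neg h.fun_neg),
    integral_toReal_lintegral_ofReal hφ h, integral_toReal_lintegral_ofReal hφ.fun_neg h.fun_neg,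
    integral_eq_lintegral_pos_part_sub_lintegral_neg_part h]

end Join

section Coupling

variable {X Y : Type*} [MeasurableSpace X] [MeasurableSpace Y]

lemma add_mem_couplings {p p' : Measure X} {q q' : Measure Y} {π π' : Measure (X × Y)}
    (hπ : π ∈ Couplings p q) (hπ' : π' ∈ Couplings p' q') :
    π + π' ∈ Couplings (p + p') (q + q') :=
  ⟨by rw [Measure.map_add _ _ measurable_fst, hπ.1, hπ'.1],
    by rw [Measure.map_add _ _ measurable_snd, hπ.2, hπ'.2]⟩

lemma sum_mem_couplings {ι : Type*} {p : ι → Measure X} {q : ι → Measure Y}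
    {π : ι → Measure (X × Y)} (hπ : ∀ i, π i ∈ Couplings (p i) (q i)) :
    Measure.sum π ∈ Couplings (Measure.sum p) (Measure.sum q) :=
  ⟨by rw [Measure.map_sum measurable_fst.aemeasurable, funext fun i => (hπ i).1],
    by rw [Measure.map_sum measurable_snd.aemeasurable, funext fun i => (hπ i).2]⟩

lemma exists_mem_couplings_of_measure_univ_eq {p : Measure X} {q : Measure Y} [IsFiniteMeasure p]
    [IsFiniteMeasure q] (h : p univ = q univ) : ∃ π, π ∈ Couplings p q := by
  rcases eq_or_ne (p univ) 0 with hp | hp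
  · have hq := h ▸ hp
    rw [Measure.measure_univ_eq_zero] at hp hq
    exact ⟨0, by simp [Couplings, hp, hq]⟩
  · refine ⟨(p univ)⁻¹ • p.prod q, ?_, ?_⟩
    · rw [Measure.map_smul, Measure.map_fst_prod, smul_smul, ← h,
        ENNReal.inv_mul_cancel hp (measure_ne_top _ _), one_smul]
    · rw [Measure.map_smul, Measure.map_snd_prod, smul_smul,
        ENNReal.inv_mul_cancel hp (measure_ne_top _ _), one_smul]

variable {p : Measure X} {q : Measure Y} {π : Measure (X × Y)} {C : X × Y → ℝ≥0∞}

lemma lintegral_le_mul_measure_univ_of_mem_couplings (hπ : π ∈ Couplings p q) {A : Set X}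
    {B : Set Y} (hA : ∀ᵐ x ∂p, x ∈ A) (hB : ∀ᵐ y ∂q, y ∈ B) {e : ℝ≥0∞}
    (hC : ∀ x ∈ A, ∀ y ∈ B, C (x, y) ≤ e) : ∫⁻ z, C z ∂π ≤ e * p univ := by
  rw [← hπ.1] at hA ⊢
  rw [← hπ.2] at hB
  calc ∫⁻ z, C z ∂π ≤ ∫⁻ _, e ∂π := by
        refine lintegral_mono_ae ?_
        filter_upwards [ae_of_ae_map measurable_fst.aemeasurable hA,
          ae_of_ae_map measurable_snd.aemeasurable hB] with z hz₁ hz₂ using hC z.1 hz₁ z.2 hz₂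
    _ = e * π.map Prod.fst univ := by
        rw [lintegral_const, Measure.map_apply measurable_fst .univ, preimage_univ]

lemma lintegral_le_add_of_mem_couplings (hπ : π ∈ Couplings p q) {D : X → ℝ≥0∞} {D' : Y → ℝ≥0∞}
    (hD : Measurable D) (hD' : Measurable D') (hC : ∀ z, C z ≤ D z.1 + D' z.2) :
    ∫⁻ z, C z ∂π ≤ ∫⁻ x, D x ∂p + ∫⁻ y, D' y ∂q := by
  rw [← hπ.1, ← hπ.2, lintegral_map hD measurable_fst, lintegral_map hD' measurable_snd,
    ← lintegral_add_left (f := fun z : X × Y => D z.1) (by fun_prop)]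
  exact lintegral_mono hC

end Coupling

section CellCoupling

open scoped ProbabilityTheory

variable {Y ι : Type*} [MeasurableSpace Y]

/-- The part of `p` that can be matched with `q` inside the cells `A i`: on each cell it has the
smaller of the two masses, distributed proportionally to `p`. -/
def overlap (p q : Measure Y) (A : ι → Set Y) : Measure Y :=
  Measure.sum fun i => min (p (A i)) (q (A i)) • p[|A i]

/-- The part of `p` left over by `overlap p q A`: the surplus of `p` over `q` on each cell, and
the restriction of `p` to the complement of the cells. -/
def excess (p q : Measure Y) (A : ι → Set Y) : Measure Y :=
  Measure.sum (fun i => (p (A i) - q (A i)) • p[|A i]) + p.restrict (⋃ i, A i)ᶜ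

lemma measure_smul_cond (p : Measure Y) [IsFiniteMeasure p] (s : Set Y) :
    p s • p[|s] = p.restrict s := by
  rcases eq_or_ne (p s) 0 with hs | hs
  · rw [hs, zero_smul, Measure.restrict_eq_zero.2 hs]
  · rw [ProbabilityTheory.cond, smul_smul, ENNReal.mul_inv_cancel hs (measure_ne_top p s),
      one_smul]

lemma overlap_add_excess [Countable ι] (p q : Measure Y) [IsFiniteMeasure p] {A : ι → Set Y}
    (hA : ∀ i, MeasurableSet (A i)) (hd : Pairwise (Function.onFun Disjoint A)) :
    overlap p q A + excess p q A = p := by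
  have hcell (i : ι) : min (p (A i)) (q (A i)) • p[|A i] + (p (A i) - q (A i)) • p[|A i] =
      p.restrict (A i) := by
    rw [← add_smul, add_comm, tsub_add_min, measure_smul_cond]
  rw [overlap, excess, ← add_assoc, Measure.sum_add_sum, funext hcell,
    ← Measure.restrict_iUnion hd hA, Measure.restrict_add_restrict_compl (.iUnion hA)]

lemma smul_cond_univ {p : Measure Y} [IsFiniteMeasure p] {s : Set Y} {m : ℝ≥0∞} (hm : m ≤ p s) :
    (m • p[|s]) univ = m := by
  rcases eq_or_ne (p s) 0 with hs | hs
  · obtain rfl : m = 0 := le_zero_iff.1 (hs ▸ hm)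
    simp
  · have := ProbabilityTheory.cond_isProbabilityMeasure hs
    simp

lemma overlap_univ (p q : Measure Y) [IsFiniteMeasure p] (A : ι → Set Y) :
    overlap p q A univ = ∑' i, min (p (A i)) (q (A i)) := by
  rw [overlap, Measure.sum_apply _ .univ]
  exact tsum_congr fun i => smul_cond_univ (min_le_left _ _)

lemma overlap_univ_comm (p q : Measure Y) [IsFiniteMeasure p] [IsFiniteMeasure q]
    (A : ι → Set Y) : overlap p q A univ = overlap q p A univ := by
  simp only [overlap_univ, min_comm]

lemma lintegral_excess_le (p q : Measure Y) [IsFiniteMeasure p] {A : ι → Set Y}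
    (hA : ∀ i, MeasurableSet (A i)) {D : Y → ℝ≥0∞} {R : ℝ≥0∞} (hR : ∀ i, ∀ x ∈ A i, D x ≤ R) :
    ∫⁻ x, D x ∂(excess p q A) ≤
      R * ∑' i, (p (A i) - q (A i)) + ∫⁻ x in (⋃ i, A i)ᶜ, D x ∂p := by
  rw [excess, lintegral_add_measure, lintegral_sum_measure, ← ENNReal.tsum_mul_left]
  gcongr with i
  set m := p (A i) - q (A i)
  calc ∫⁻ x, D x ∂(m • p[|A i]) ≤ ∫⁻ _, R ∂(m • p[|A i]) := by
        refine lintegral_mono_ae (Measure.ae_smul_measure ?_ m)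
        filter_upwards [ProbabilityTheory.ae_cond_mem (hA i)] with x hx using hR i x hx
    _ = R * m := by rw [lintegral_const, smul_cond_univ tsub_le_self]

lemma exists_mem_couplings_overlap (p q : Measure Y) [IsFiniteMeasure p] [IsFiniteMeasure q]
    {A : ι → Set Y} (hA : ∀ i, MeasurableSet (A i)) {C : Y × Y → ℝ≥0∞} {e : ℝ≥0∞}
    (hC : ∀ i, ∀ x ∈ A i, ∀ y ∈ A i, C (x, y) ≤ e) :
    ∃ π ∈ Couplings (overlap p q A) (overlap q p A),
      ∫⁻ z, C z ∂π ≤ e * overlap p q A univ := by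
  have hcell (i : ι) : ∃ π, π ∈ Couplings (min (p (A i)) (q (A i)) • p[|A i])
      (min (q (A i)) (p (A i)) • q[|A i]) := by
    have hp : min (p (A i)) (q (A i)) ≠ ⊤ := ((min_le_left _ _).trans_lt (measure_lt_top p _)).ne
    have hq : min (q (A i)) (p (A i)) ≠ ⊤ := min_comm (p (A i)) _ ▸ hp
    have := Measure.smul_finite p[|A i] hp
    have := Measure.smul_finite q[|A i] hq
    refine exists_mem_couplings_of_measure_univ_eq ?_
    rw [smul_cond_univ (min_le_left _ _), smul_cond_univ (min_le_left _ _), min_comm]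
  choose π hπ using hcell
  refine ⟨Measure.sum π, sum_mem_couplings hπ, ?_⟩
  rw [lintegral_sum_measure, overlap, Measure.sum_apply _ .univ, ← ENNReal.tsum_mul_left]
  exact ENNReal.tsum_le_tsum fun i => lintegral_le_mul_measure_univ_of_mem_couplings (hπ i)
    (Measure.ae_smul_measure (ProbabilityTheory.ae_cond_mem (hA i)) _)
    (Measure.ae_smul_measure (ProbabilityTheory.ae_cond_mem (hA i)) _) (hC i)

lemma exists_mem_couplings_lintegral_le [Countable ι] {p q : Measure Y} [IsFiniteMeasure p]
    [IsFiniteMeasure q] (hpq : p univ = q univ) {A : ι → Set Y} (hA : ∀ i, MeasurableSet (A i))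
    (hd : Pairwise (Function.onFun Disjoint A)) {C : Y × Y → ℝ≥0∞} {D : Y → ℝ≥0∞}
    (hD : Measurable D) {R e : ℝ≥0∞} (hR : ∀ i, ∀ x ∈ A i, D x ≤ R)
    (he : ∀ i, ∀ x ∈ A i, ∀ y ∈ A i, C (x, y) ≤ e) (hC : ∀ z, C z ≤ D z.1 + D z.2) :
    ∃ π ∈ Couplings p q, ∫⁻ z, C z ∂π ≤ e * p univ +
      ((R * ∑' i, (p (A i) - q (A i)) + ∫⁻ x in (⋃ i, A i)ᶜ, D x ∂p) +
        (R * ∑' i, (q (A i) - p (A i)) + ∫⁻ x in (⋃ i, A i)ᶜ, D x ∂q)) := by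
  have hp := overlap_add_excess p q hA hd
  have hq := overlap_add_excess q p hA hd
  have hp_univ : overlap p q A univ + excess p q A univ = p univ := by
    rw [← Measure.add_apply, hp]
  have hq_univ : overlap q p A univ + excess q p A univ = q univ := by
    rw [← Measure.add_apply, hq]
  have : IsFiniteMeasure (excess p q A) :=
    ⟨(le_add_self.trans_eq hp_univ).trans_lt (measure_lt_top p _)⟩
  have : IsFiniteMeasure (excess q p A) :=
    ⟨(le_add_self.trans_eq hq_univ).trans_lt (measure_lt_top q _)⟩
  have hoverlap_le : overlap p q A univ ≤ p univ := le_self_add.trans_eq hp_univ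
  have hexcess : excess p q A univ = excess q p A univ := by
    rw [overlap_univ_comm q p, ← hpq, ← hp_univ] at hq_univ
    exact ((ENNReal.add_right_inj (hoverlap_le.trans_lt (measure_lt_top p _)).ne).1 hq_univ).symm
  obtain ⟨π, hπ, hπ_le⟩ := exists_mem_couplings_overlap p q hA he
  obtain ⟨π', hπ'⟩ := exists_mem_couplings_of_measure_univ_eq hexcess
  refine ⟨π + π', by simpa only [hp, hq] using add_mem_couplings hπ hπ', ?_⟩
  rw [lintegral_add_measure]
  gcongr
  · exact hπ_le.trans (by gcongr)
  · exact (lintegral_le_add_of_mem_couplings hπ' hD hD hC).trans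
      (add_le_add (lintegral_excess_le p q hA hR) (lintegral_excess_le q p hA hR))

end CellCoupling

section GrowthSpace

variable {Y : Type*} [MeasurableSpace Y] [PseudoMetricSpace Y] {r : ℝ} {y₀ : Y}

variable (r y₀) in
/-- The measurable functions of `r`-growth: the functions that all `p ∈ 𝒫_r(Y)` integrate because
of their moment bound. Unlike in `PhiR`, continuity is not required, so that indicators of cells
are included. -/
def growthSpace : Submodule ℝ (Y → ℝ) where
  carrier := {φ | Measurable φ ∧ ∃ K : ℝ, ∀ x, |φ x| ≤ K * (1 + dist x y₀ ^ r)}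
  zero_mem' := ⟨measurable_const, 0, by simp⟩
  add_mem' := by
    rintro φ ψ ⟨hφ, K, hK⟩ ⟨hψ, L, hL⟩
    refine ⟨hφ.add hψ, K + L, fun x => (abs_add_le _ _).trans ?_⟩
    rw [add_mul]
    exact add_le_add (hK x) (hL x)
  smul_mem' := by
    rintro c φ ⟨hφ, K, hK⟩
    refine ⟨hφ.const_smul c, |c| * K, fun x => ?_⟩
    rw [Pi.smul_apply, smul_eq_mul, abs_mul, mul_assoc]
    exact mul_le_mul_of_nonneg_left (hK x) (abs_nonneg c)

lemma measurable_dist_rpow [OpensMeasurableSpace Y] : Measurable fun x : Y => dist x y₀ ^ r :=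
  (continuous_id.dist continuous_const).measurable.pow_const r

lemma dist_rpow_mem_growthSpace [OpensMeasurableSpace Y] :
    (fun x => dist x y₀ ^ r) ∈ growthSpace r y₀ := by
  refine ⟨measurable_dist_rpow, 1, fun x => ?_⟩
  rw [abs_of_nonneg (by positivity)]
  linarith

lemma const_mem_growthSpace (c : ℝ) : (fun _ => c) ∈ growthSpace r y₀ := by
  refine ⟨measurable_const, |c|, fun x => le_mul_of_one_le_right (abs_nonneg c) ?_⟩
  exact le_add_of_nonneg_right (by positivity)

lemma indicator_mem_growthSpace {φ : Y → ℝ} (hφ : φ ∈ growthSpace r y₀) {s : Set Y}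
    (hs : MeasurableSet s) : s.indicator φ ∈ growthSpace r y₀ := by
  obtain ⟨hm, K, hK⟩ := hφ
  refine ⟨hm.indicator hs, K, fun x => le_trans ?_ (hK x)⟩
  simpa only [Real.norm_eq_abs] using norm_indicator_le_norm_self φ x

lemma integrable_of_mem_growthSpace [OpensMeasurableSpace Y] {φ : Y → ℝ}
    (hφ : φ ∈ growthSpace r y₀) {p : Measure Y} (hp : p ∈ Pr r y₀) : Integrable φ p := by
  obtain ⟨hm, K, hK⟩ := hφ
  have := hp.1
  have hdist : Integrable (fun x => dist x y₀ ^ r) p := by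
    refine ⟨measurable_dist_rpow.aestronglyMeasurable, ?_⟩
    rw [hasFiniteIntegral_iff_ofReal (.of_forall fun x => by positivity)]
    exact hp.2
  exact (((integrable_const 1).add hdist).const_mul K).mono' hm.aestronglyMeasurable
    (.of_forall hK)

end GrowthSpace

section GrowthTopology

variable {Y : Type*} [MeasurableSpace Y] [PseudoMetricSpace Y] [OpensMeasurableSpace Y]
  {r : ℝ} {y₀ : Y}

variable (r y₀) in
/-- The algebraic dual of `growthSpace r y₀` with the topology of pointwise convergence: the
locally convex space in which `𝒫_r(Y)` is embedded by integration. -/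
abbrev GrowthDual : Type _ :=
  WeakBilin (LinearMap.id (R := ℝ) (M := Module.Dual ℝ (growthSpace r y₀)))

/-- The functional `φ ↦ ∫ φ dp`, which embeds `𝒫_r(Y)` into `GrowthDual r y₀`. -/
def integralFunctional (p : Pr r y₀) : GrowthDual r y₀ where
  toFun φ := ∫ x, φ.1 x ∂p
  map_add' φ ψ := integral_add (integrable_of_mem_growthSpace φ.2 p.2)
    (integrable_of_mem_growthSpace ψ.2 p.2)
  map_smul' c φ := integral_const_mul c φ.1

/-- The neighbourhoods of `p₀` in the coarsest topology on `𝒫_r(Y)` for which `p ↦ ∫ φ dp` is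
continuous for every `φ` in `growthSpace r y₀`. -/
def growthNhds (p₀ : Pr r y₀) : Filter (Pr r y₀) :=
  comap integralFunctional (𝓝 (integralFunctional p₀))

lemma tendsto_integral_growthNhds (p₀ : Pr r y₀) {φ : Y → ℝ} (hφ : φ ∈ growthSpace r y₀) :
    Tendsto (fun p : Pr r y₀ => ∫ x, φ x ∂p.1) (growthNhds p₀) (𝓝 (∫ x, φ x ∂p₀.1)) :=
  ((WeakBilin.eval_continuous LinearMap.id ⟨φ, hφ⟩).tendsto (integralFunctional p₀)).comp
    tendsto_comap

lemma tendsto_setLIntegral_growthNhds (p₀ : Pr r y₀) {φ : Y → ℝ} (hφ : φ ∈ growthSpace r y₀)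
    (hφ0 : 0 ≤ φ) {s : Set Y} (hs : MeasurableSet s) :
    Tendsto (fun p : Pr r y₀ => ∫⁻ x in s, ENNReal.ofReal (φ x) ∂p.1) (growthNhds p₀)
      (𝓝 (∫⁻ x in s, ENNReal.ofReal (φ x) ∂p₀.1)) := by
  have hlintegral (p : Pr r y₀) :
      ∫⁻ x in s, ENNReal.ofReal (φ x) ∂p.1 = ENNReal.ofReal (∫ x, s.indicator φ x ∂p.1) := by
    rw [integral_indicator hs, ofReal_integral_eq_lintegral_ofReal
      (integrable_of_mem_growthSpace hφ p.2).integrableOn (.of_forall hφ0)]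
  simp only [hlintegral]
  exact ENNReal.tendsto_ofReal (tendsto_integral_growthNhds p₀ (indicator_mem_growthSpace hφ hs))

lemma tendsto_measure_growthNhds (p₀ : Pr r y₀) {s : Set Y} (hs : MeasurableSet s) :
    Tendsto (fun p : Pr r y₀ => p.1 s) (growthNhds p₀) (𝓝 (p₀.1 s)) := by
  simpa using tendsto_setLIntegral_growthNhds p₀ (const_mem_growthSpace 1)
    (fun _ => zero_le_one) hs

end GrowthTopology

section Approximation

variable {Y : Type*} [PseudoMetricSpace Y] {r : ℝ}

lemma dist_rpow_le (hr : 0 ≤ r) (x y z : Y) :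
    dist x y ^ r ≤ 2 ^ r * dist x z ^ r + 2 ^ r * dist y z ^ r := by
  have hmax : dist x y ≤ 2 * max (dist x z) (dist y z) := by
    have := dist_triangle_right x y z
    linarith [le_max_left (dist x z) (dist y z), le_max_right (dist x z) (dist y z)]
  have hmax0 : 0 ≤ max (dist x z) (dist y z) := le_max_of_le_left dist_nonneg
  calc dist x y ^ r ≤ (2 * max (dist x z) (dist y z)) ^ r :=
        Real.rpow_le_rpow dist_nonneg hmax hr
    _ = 2 ^ r * max (dist x z ^ r) (dist y z ^ r) := by
        rw [Real.mul_rpow zero_le_two hmax0,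
          (Real.monotoneOn_rpow_Ici_of_exponent_nonneg hr).map_max dist_nonneg dist_nonneg]
    _ ≤ 2 ^ r * (dist x z ^ r + dist y z ^ r) := by
        gcongr
        exact max_le_add_of_nonneg (by positivity) (by positivity)
    _ = 2 ^ r * dist x z ^ r + 2 ^ r * dist y z ^ r := mul_add _ _ _

lemma ofReal_dist_rpow_le (hr : 0 ≤ r) (x y z : Y) :
    ENNReal.ofReal (dist x y ^ r) ≤
      ENNReal.ofReal (2 ^ r * dist x z ^ r) + ENNReal.ofReal (2 ^ r * dist y z ^ r) := by
  rw [← ENNReal.ofReal_add (by positivity) (by positivity)]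
  exact ENNReal.ofReal_le_ofReal (dist_rpow_le hr x y z)

lemma exists_ofReal_dist_rpow_le_of_isBounded (hr : 0 ≤ r) {s : Set Y}
    (hs : Bornology.IsBounded s) (y : Y) :
    ∃ R : ℝ≥0, ∀ x ∈ s, ENNReal.ofReal (2 ^ r * dist x y ^ r) ≤ R := by
  obtain ⟨R, hR⟩ := hs.subset_closedBall y
  refine ⟨(2 ^ r * R ^ r).toNNReal, fun x hx => ENNReal.ofReal_le_ofReal ?_⟩
  gcongr
  exact hR hx

lemma exists_pos_rpow_le (hr : 0 < r) {e : ℝ} (he : 0 < e) : ∃ η > 0, η ^ r ≤ e :=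
  ⟨e ^ r⁻¹, by positivity, (Real.rpow_inv_rpow he.le hr.ne').le⟩

lemma exists_finset_setLIntegral_compl_iUnion_lt {X : Type*} [MeasurableSpace X] {μ : Measure X}
    {A : ℕ → Set X} (hA : ∀ n, MeasurableSet (A n)) (hcover : ⋃ n, A n = univ)
    (hd : Pairwise (Function.onFun Disjoint A)) {f : X → ℝ≥0∞} (hf : ∫⁻ x, f x ∂μ ≠ ⊤)
    {e : ℝ≥0∞} (he : 0 < e) :
    ∃ s : Finset ℕ, ∫⁻ x in (⋃ i : s, A i)ᶜ, f x ∂μ < e := by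
  have htsum : ∑' n, ∫⁻ x in A n, f x ∂μ ≠ ⊤ := by
    rwa [← lintegral_iUnion hA hd, hcover, Measure.restrict_univ]
  obtain ⟨s, hs⟩ := ((ENNReal.tendsto_tsum_compl_atTop_zero htsum).eventually_lt_const he).exists
  refine ⟨s, lt_of_le_of_lt ?_ hs⟩
  have hsub : (⋃ i : s, A i)ᶜ ⊆ ⋃ n : {n // n ∉ s}, A n := by
    intro x hx
    obtain ⟨n, hn⟩ := mem_iUnion.1 (hcover.symm ▸ mem_univ x : x ∈ ⋃ n, A n)
    exact mem_iUnion.2 ⟨⟨n, fun hns => hx (mem_iUnion.2 ⟨⟨n, hns⟩, hn⟩)⟩, hn⟩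
  exact (lintegral_mono_set hsub).trans (lintegral_iUnion_le _ _)

lemma ofReal_dist_rpow_le_of_diam_le (hr : 0 ≤ r) {s : Set Y} (hs : Bornology.IsBounded s)
    {η e : ℝ} (hdiam : Metric.diam s ≤ η) (he : η ^ r ≤ e) {x y : Y} (hx : x ∈ s) (hy : y ∈ s) :
    ENNReal.ofReal (dist x y ^ r) ≤ ENNReal.ofReal e := by
  refine ENNReal.ofReal_le_ofReal (le_trans ?_ he)
  gcongr
  exact (Metric.dist_le_diam_of_mem hs hx hy).trans hdiam

variable [MeasurableSpace Y] [OpensMeasurableSpace Y] {y₀ : Y}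

lemma lintegral_const_mul_dist_rpow_ne_top {p : Measure Y} (hp : p ∈ Pr r y₀) (c : ℝ) :
    ∫⁻ x, ENNReal.ofReal (c * dist x y₀ ^ r) ∂p ≠ ⊤ :=
  ((integrable_of_mem_growthSpace dist_rpow_mem_growthSpace hp).const_mul c).lintegral_lt_top.ne

lemma exists_finite_cells [SecondCountableTopology Y] (hr : 0 < r) {p₀ : Measure Y}
    (hp₀ : p₀ ∈ Pr r y₀) {e : ℝ} (he : 0 < e) :
    ∃ (s : Finset ℕ) (A : s → Set Y) (R : ℝ≥0), (∀ i, MeasurableSet (A i)) ∧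
      Pairwise (Function.onFun Disjoint A) ∧
      (∀ i, ∀ x ∈ A i, ENNReal.ofReal (2 ^ r * dist x y₀ ^ r) ≤ R) ∧
      (∀ i, ∀ x ∈ A i, ∀ y ∈ A i, ENNReal.ofReal (dist x y ^ r) ≤ ENNReal.ofReal e) ∧
      ∫⁻ x in (⋃ i, A i)ᶜ, ENNReal.ofReal (2 ^ r * dist x y₀ ^ r) ∂p₀ < ENNReal.ofReal e := by
  obtain ⟨η, hη, hηe⟩ := exists_pos_rpow_le hr he
  obtain ⟨A, hA, hbdd, hdiam, hcover, hd⟩ :=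
    SeparableSpace.exists_measurable_partition_diam_le Y hη
  obtain ⟨s, hs⟩ := exists_finset_setLIntegral_compl_iUnion_lt hA hcover hd
    (lintegral_const_mul_dist_rpow_ne_top hp₀ (2 ^ r)) (ENNReal.ofReal_pos.2 he)
  obtain ⟨R, hR⟩ := exists_ofReal_dist_rpow_le_of_isBounded hr.le
    ((Bornology.isBounded_biUnion s.finite_toSet).2 fun i _ => hbdd i) y₀
  exact ⟨s, fun i => A i, R, fun i => hA i, hd.comp_of_injective Subtype.val_injective,
    fun i x hx => hR x (mem_biUnion i.2 hx),
    fun i x hx y hy => ofReal_dist_rpow_le_of_diam_le hr.le (hbdd i) (hdiam i) hηe hx hy, hs⟩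

end Approximation

section WassersteinGrowth

lemma tendsto_tsum_sub_zero {α ι : Type*} [Finite ι] {l : Filter α} {u v : α → ι → ℝ≥0∞}
    {a : ι → ℝ≥0∞} (ha : ∀ i, a i ≠ ⊤) (hu : ∀ i, Tendsto (u · i) l (𝓝 (a i)))
    (hv : ∀ i, Tendsto (v · i) l (𝓝 (a i))) :
    Tendsto (fun x => ∑' i, (u x i - v x i)) l (𝓝 0) := by
  have := Fintype.ofFinite ι
  simp only [tsum_fintype]
  simpa only [tsub_self, Finset.sum_const_zero] using
    tendsto_finsetSum Finset.univ fun i _ => ENNReal.Tendsto.sub (hu i) (hv i) (.inl (ha i))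

lemma Wr_le_of_mem_couplings {Y : Type*} [MeasurableSpace Y] [PseudoMetricSpace Y] {r : ℝ}
    (hr : 0 < r) {p q : Measure Y} {π : Measure (Y × Y)} (hπ : π ∈ Couplings p q) {ε : ℝ≥0∞}
    (h : ∫⁻ z, ENNReal.ofReal (dist z.1 z.2 ^ r) ∂π ≤ ε ^ r) : Wr r p q ≤ ε := by
  refine (iInf₂_le π hπ).trans ?_
  rwa [one_div, ENNReal.rpow_inv_le_iff hr]

variable {Y : Type*} [MeasurableSpace Y] [PseudoMetricSpace Y] [OpensMeasurableSpace Y]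
  {r : ℝ} {y₀ : Y}

lemma tendsto_coupling_bound_growthNhds {ι : Type*} [Finite ι] (p₀ : Pr r y₀) {A : ι → Set Y}
    (hA : ∀ i, MeasurableSet (A i)) {D : Y → ℝ} (hD : D ∈ growthSpace r y₀) (hD0 : 0 ≤ D)
    (e R : ℝ≥0) :
    Tendsto (fun p : Pr r y₀ => e * p.1 univ +
      ((R * ∑' i, (p.1 (A i) - p₀.1 (A i)) +
          ∫⁻ x in (⋃ i, A i)ᶜ, ENNReal.ofReal (D x) ∂p.1) +
        (R * ∑' i, (p₀.1 (A i) - p.1 (A i)) +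
          ∫⁻ x in (⋃ i, A i)ᶜ, ENNReal.ofReal (D x) ∂p₀.1)))
      (growthNhds p₀) (𝓝 (e + (∫⁻ x in (⋃ i, A i)ᶜ, ENNReal.ofReal (D x) ∂p₀.1 +
        ∫⁻ x in (⋃ i, A i)ᶜ, ENNReal.ofReal (D x) ∂p₀.1))) := by
  have hp₀ : IsProbabilityMeasure p₀.1 := p₀.2.1
  have hne_top (i : ι) : p₀.1 (A i) ≠ ⊤ := measure_ne_top _ _
  have hcell (i : ι) := tendsto_measure_growthNhds p₀ (hA i)
  have hcell₀ (i : ι) : Tendsto (fun _ : Pr r y₀ => p₀.1 (A i)) (growthNhds p₀)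
    (𝓝 (p₀.1 (A i))) := tendsto_const_nhds
  have hmul {c : ℝ≥0} {u : Pr r y₀ → ℝ≥0∞} {a : ℝ≥0∞} (hu : Tendsto u (growthNhds p₀) (𝓝 a)) :
      Tendsto (fun p => c * u p) (growthNhds p₀) (𝓝 (c * a)) :=
    ENNReal.Tendsto.const_mul hu (.inr ENNReal.coe_ne_top)
  have hsurplus := hmul (c := R) (tendsto_tsum_sub_zero hne_top hcell hcell₀)
  have hdeficit := hmul (c := R) (tendsto_tsum_sub_zero hne_top hcell₀ hcell)
  have htail := tendsto_setLIntegral_growthNhds p₀ hD hD0 (MeasurableSet.iUnion hA).compl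
  simpa only [measure_univ, mul_one, mul_zero, zero_add] using
    (hmul (c := e) (tendsto_measure_growthNhds p₀ .univ)).add
      ((hsurplus.add htail).add (hdeficit.add_const _))

variable [SecondCountableTopology Y]

lemma eventually_exists_mem_couplings (hr : 0 < r) (p₀ : Pr r y₀) {ε : ℝ≥0∞} (hε : ε ≠ 0) :
    ∀ᶠ p in growthNhds p₀, ∃ π ∈ Couplings p.1 p₀.1,
      ∫⁻ z, ENNReal.ofReal (dist z.1 z.2 ^ r) ∂π ≤ ε := by
  obtain ⟨δ, hδ, hδε⟩ : ∃ δ : ℝ≥0, 0 < δ ∧ δ * 3 < ε :=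
    ENNReal.exists_nnreal_pos_mul_lt ENNReal.ofNat_ne_top hε
  obtain ⟨s, A, R, hA, hd, hR, he, htail⟩ := exists_finite_cells hr p₀.2 (NNReal.coe_pos.2 hδ)
  rw [ENNReal.ofReal_coe_nnreal] at htail he
  have hD : (fun x => 2 ^ r * dist x y₀ ^ r) ∈ growthSpace r y₀ :=
    Submodule.smul_mem _ (2 ^ r) dist_rpow_mem_growthSpace
  have hbound := tendsto_coupling_bound_growthNhds p₀ hA hD (fun x => by positivity) δ R
  have hlimit : δ + (∫⁻ x in (⋃ i, A i)ᶜ, ENNReal.ofReal (2 ^ r * dist x y₀ ^ r) ∂p₀.1 +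
      ∫⁻ x in (⋃ i, A i)ᶜ, ENNReal.ofReal (2 ^ r * dist x y₀ ^ r) ∂p₀.1) < ε :=
    calc _ ≤ δ + ((δ : ℝ≥0∞) + δ) := by gcongr
      _ = δ * 3 := by ring
      _ < ε := hδε
  filter_upwards [hbound.eventually_lt_const hlimit] with p hp
  have : IsProbabilityMeasure p.1 := p.2.1
  have : IsProbabilityMeasure p₀.1 := p₀.2.1
  obtain ⟨π, hπ, hπ_le⟩ := exists_mem_couplings_lintegral_le (p := p.1) (q := p₀.1) (by simp)
    hA hd hD.1.ennreal_ofReal hR he fun z => ofReal_dist_rpow_le hr.le z.1 z.2 y₀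
  exact ⟨π, hπ, hπ_le.trans hp.le⟩

lemma tendsto_Wr_growthNhds (hr : 0 < r) (p₀ : Pr r y₀) :
    Tendsto (fun p : Pr r y₀ => Wr r p.1 p₀.1) (growthNhds p₀) (𝓝 0) := by
  refine ENNReal.tendsto_nhds_zero.2 fun ε hε => ?_
  have hεr : ε ^ r ≠ 0 := (ENNReal.rpow_pos_of_nonneg hε hr.le).ne'
  filter_upwards [eventually_exists_mem_couplings hr p₀ hεr] with p ⟨π, hπ, hle⟩
  exact Wr_le_of_mem_couplings hr hπ hle

end WassersteinGrowth

section Semicontinuity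

variable {Y : Type*} [MeasurableSpace Y] [PseudoMetricSpace Y] {r : ℝ} {y₀ : Y}
  {F : Measure Y → EReal}

lemma eventually_lt_of_lscWr1 (hlsc : LscWr1 r y₀ F) (p₀ : Pr r y₀) {c : EReal}
    (hc : c < F p₀) :
    ∀ᶠ p : Pr r y₀ in comap (fun p : Pr r y₀ => Wr r p.1 p₀.1) (𝓝 0), c < F p := by
  by_contra hcon
  obtain ⟨ps, hps, hle⟩ := exists_seq_forall_of_frequently (not_eventually.1 hcon)
  have hconv : WrTendsto r (fun n => (ps n).1) p₀.1 :=
    (tendsto_comap (f := fun p : Pr r y₀ => Wr r p.1 p₀.1)).comp hps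
  have hliminf := hlsc p₀ (fun n => (ps n).1) p₀.2 (fun n => (ps n).2) hconv
  refine hliminf.not_gt (lt_of_le_of_lt ?_ hc)
  exact (liminf_le_liminf (.of_forall fun n => not_lt.1 (hle n))).trans_eq (liminf_const c)

lemma eventually_growthNhds_lt_of_lscWr1 [OpensMeasurableSpace Y] [SecondCountableTopology Y]
    (hr : 0 < r) (hlsc : LscWr1 r y₀ F) (p₀ : Pr r y₀) {c : EReal} (hc : c < F p₀) :
    ∀ᶠ p : Pr r y₀ in growthNhds p₀, c < F p :=
  (tendsto_Wr_growthNhds hr p₀).le_comap (eventually_lt_of_lscWr1 hlsc p₀ hc)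

end Semicontinuity

section AffineMinorant

variable {E : Type*} [AddCommGroup E] [Module ℝ E] [TopologicalSpace E] {A : Set (E × ℝ)}
  {x₀ : E} {c : ℝ}

lemma exists_affine_minorant_of_slope_pos {l : E →L[ℝ] ℝ} {s b : ℝ} (hs : 0 < s)
    (hx₀ : l x₀ + s * c < b) (hA : ∀ x t, (x, t) ∈ A → b < l x + s * t) :
    ∃ (m : E →L[ℝ] ℝ) (d : ℝ), c < m x₀ + d ∧ ∀ x t, (x, t) ∈ A → m x + d ≤ t := by
  have hform (x : E) : (-(s⁻¹) • l) x + s⁻¹ * b = (b - l x) / s := by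
    simp only [smul_apply, smul_eq_mul]
    ring
  refine ⟨-(s⁻¹) • l, s⁻¹ * b, ?_, fun x t hxt => ?_⟩
  · rw [hform, lt_div_iff₀ hs]
    linarith
  · rw [hform, div_le_iff₀ hs]
    linarith [hA x t hxt]

variable [IsTopologicalAddGroup E] [ContinuousSMul ℝ E] [LocallyConvexSpace ℝ E]

lemma exists_separating_functional_of_notMem_closure (hA : Convex ℝ A)
    (hne : A.Nonempty) (hup : ∀ x t, (x, t) ∈ A → ∀ t', t ≤ t' → (x, t') ∈ A)
    (h : (x₀, c) ∉ closure A) :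
    ∃ (l : E →L[ℝ] ℝ) (s b : ℝ), 0 ≤ s ∧ l x₀ + s * c < b ∧
      ∀ x t, (x, t) ∈ A → b < l x + s * t := by
  obtain ⟨f, b, hx₀, hf⟩ := geometric_hahn_banach_point_closed hA.closure isClosed_closure h
  set l : E →L[ℝ] ℝ := f.comp (ContinuousLinearMap.inl ℝ E ℝ)
  set s : ℝ := f (0, 1)
  have hsplit (x : E) (t : ℝ) : f (x, t) = l x + s * t := by
    have : (x, t) = (x, 0) + t • ((0 : E), (1 : ℝ)) := by simp
    rw [this, map_add, map_smul, smul_eq_mul, mul_comm]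
    rfl
  have hbelow (x : E) (t : ℝ) (hxt : (x, t) ∈ A) : b < l x + s * t :=
    hsplit x t ▸ hf _ (subset_closure hxt)
  refine ⟨l, s, b, ?_, hsplit x₀ c ▸ hx₀, hbelow⟩
  by_contra! hs
  obtain ⟨⟨x, t⟩, hxt⟩ := hne
  have hlarge := hbelow x _ (hup x t hxt _ (le_max_left t ((b - l x) / s)))
  have : s * max t ((b - l x) / s) ≤ b - l x := by
    calc s * max t ((b - l x) / s) ≤ s * ((b - l x) / s) :=
          mul_le_mul_of_nonpos_left (le_max_right _ _) hs.le
      _ = b - l x := mul_div_cancel₀ _ hs.ne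
  linarith

lemma exists_affine_minorant (hA : Convex ℝ A)
    (hup : ∀ x t, (x, t) ∈ A → ∀ t', t ≤ t' → (x, t') ∈ A)
    (hproper : ∀ x t, (x, t) ∈ A → ∃ c, (x, c) ∉ closure A) (h : (x₀, c) ∉ closure A) :
    ∃ (m : E →L[ℝ] ℝ) (d : ℝ), c < m x₀ + d ∧ ∀ x t, (x, t) ∈ A → m x + d ≤ t := by
  rcases A.eq_empty_or_nonempty with rfl | hne
  · exact ⟨0, c + 1, by simp, by simp⟩
  obtain ⟨l, s, b, hs, hx₀, hl⟩ := exists_separating_functional_of_notMem_closure hA hne hup h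
  rcases hs.lt_or_eq with hs | rfl
  · exact exists_affine_minorant_of_slope_pos hs hx₀ hl
  -- The separating hyperplane is vertical: a large multiple of it is added to a minorant obtained
  -- by separating a point below `A` over its domain, where no vertical hyperplane can separate.
  obtain ⟨m, d, hm⟩ : ∃ (m : E →L[ℝ] ℝ) (d : ℝ), ∀ x t, (x, t) ∈ A → m x + d ≤ t := by
    obtain ⟨⟨x₁, t₁⟩, hx₁⟩ := hne
    obtain ⟨c₁, hc₁⟩ := hproper x₁ t₁ hx₁
    obtain ⟨l₁, s₁, b₁, hs₁, hbelow, habove⟩ :=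
      exists_separating_functional_of_notMem_closure hA ⟨_, hx₁⟩ hup hc₁
    have hs₁ : s₁ ≠ 0 := by
      rintro rfl
      linarith [habove x₁ t₁ hx₁]
    obtain ⟨m, d, -, hm⟩ := exists_affine_minorant_of_slope_pos (by positivity) hbelow habove
    exact ⟨m, d, hm⟩
  simp only [zero_mul, add_zero] at hx₀ hl
  obtain ⟨n, hn⟩ := exists_nat_gt ((c - (m x₀ + d)) / (b - l x₀))
  rw [div_lt_iff₀ (sub_pos.2 hx₀)] at hn
  refine ⟨m - (n : ℝ) • l, d + n * b, ?_, fun x t hxt => ?_⟩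
  · simp only [sub_apply, smul_apply, smul_eq_mul]
    linarith
  · simp only [sub_apply, smul_apply, smul_eq_mul]
    nlinarith [hm x t hxt, hl x t hxt, n.cast_nonneg (α := ℝ)]

end AffineMinorant

section Epigraph

variable {Y : Type*} [MeasurableSpace Y] [PseudoMetricSpace Y] {r : ℝ} {y₀ : Y}
  {F : Measure Y → EReal}

lemma convexCombination_mem_Pr {p q : Measure Y} (hp : p ∈ Pr r y₀) (hq : q ∈ Pr r y₀) {t : ℝ≥0}
    (ht : t ≤ 1) : (t : ℝ≥0∞) • p + ((1 - t : ℝ≥0) : ℝ≥0∞) • q ∈ Pr r y₀ := by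
  have := hp.1
  have := hq.1
  refine ⟨⟨?_⟩, ?_⟩
  · simp only [Measure.add_apply, Measure.smul_apply, measure_univ, smul_eq_mul, mul_one]
    rw [← ENNReal.coe_add, add_tsub_cancel_of_le ht, ENNReal.coe_one]
  · rw [FinMom, lintegral_add_measure, lintegral_smul_measure, lintegral_smul_measure]
    exact ENNReal.add_lt_top.2 ⟨ENNReal.mul_lt_top ENNReal.coe_lt_top hp.2,
      ENNReal.mul_lt_top ENNReal.coe_lt_top hq.2⟩

variable [OpensMeasurableSpace Y]

lemma integralFunctional_convexCombination (p q : Pr r y₀) {t : ℝ≥0} (ht : t ≤ 1) :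
    integralFunctional ⟨_, convexCombination_mem_Pr p.2 q.2 ht⟩ =
      (t : ℝ) • integralFunctional p + ((1 - t : ℝ≥0) : ℝ) • integralFunctional q := by
  refine LinearMap.ext fun φ => ?_
  have hint (p : Pr r y₀) (c : ℝ≥0) : Integrable φ.1 ((c : ℝ≥0∞) • p.1) :=
    (integrable_of_mem_growthSpace φ.2 p.2).smul_measure ENNReal.coe_ne_top
  exact (integral_add_measure (hint p t) (hint q _)).trans
    (congrArg₂ (· + ·) (integral_smul_measure _ _) (integral_smul_measure _ _))

variable (r y₀) in
/-- The epigraph of `F` restricted to `𝒫_r(Y)`, viewed as a subset of `GrowthDual r y₀ × ℝ`. -/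
def epigraph (F : Measure Y → EReal) : Set (GrowthDual r y₀ × ℝ) :=
  {z | ∃ p : Pr r y₀, integralFunctional p = z.1 ∧ F p ≤ z.2}

lemma convex_epigraph (hF : EConvexOn (Pr r y₀) F) : Convex ℝ (epigraph r y₀ F) := by
  rintro ⟨_, t⟩ ⟨p, rfl, hp⟩ ⟨_, u⟩ ⟨q, rfl, hq⟩ a b ha hb hab
  lift a to ℝ≥0 using ha
  lift b to ℝ≥0 using hb
  have hab' : a + b = 1 := mod_cast hab
  have ha1 : a ≤ 1 := hab' ▸ le_self_add
  obtain rfl : b = 1 - a := by rw [← hab', add_tsub_cancel_left]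
  refine ⟨⟨_, convexCombination_mem_Pr p.2 q.2 ha1⟩,
    integralFunctional_convexCombination p q ha1, (hF p p.2 q q.2 a ha1).trans ?_⟩
  have hmul {c : ℝ≥0} {x : EReal} {y : ℝ} (hxy : x ≤ y) : ((c : ℝ) : EReal) * x ≤ (c * y : ℝ) :=
    mul_le_mul_of_nonneg_left hxy (EReal.coe_nonneg.2 c.2)
  exact add_le_add (hmul hp) (hmul hq)

lemma notMem_closure_epigraph [SecondCountableTopology Y] (hr : 0 < r) (hlsc : LscWr1 r y₀ F)
    (p₀ : Pr r y₀) {c : ℝ} (hc : (c : EReal) < F p₀) :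
    (integralFunctional p₀, c) ∉ closure (epigraph r y₀ F) := by
  obtain ⟨c', hcc', hc'⟩ := EReal.lt_iff_exists_real_btwn.1 hc
  obtain ⟨U, hU, hUF⟩ := eventually_growthNhds_lt_of_lscWr1 hr hlsc p₀ hc'
  intro hmem
  obtain ⟨⟨_, t⟩, ⟨hx, ht⟩, p, rfl, hpt⟩ := mem_closure_iff_nhds.1 hmem _
    (prod_mem_nhds hU (Iio_mem_nhds (EReal.coe_lt_coe_iff.1 hcc')))
  exact ((EReal.coe_lt_coe_iff.2 ht).trans (hUF hx)).not_ge hpt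

lemma exists_integral_eq_apply_integralFunctional_add (m : GrowthDual r y₀ →L[ℝ] ℝ) (d : ℝ) :
    ∃ φ ∈ growthSpace r y₀, ∀ p : Pr r y₀, ∫ x, φ x ∂p.1 = m (integralFunctional p) + d := by
  obtain ⟨φ, hφ⟩ := LinearMap.dualEmbedding_surjective
    (LinearMap.id (R := ℝ) (M := Module.Dual ℝ (growthSpace r y₀))) m
  refine ⟨fun x => φ.1 x + d, Submodule.add_mem _ φ.2 (const_mem_growthSpace d), fun p => ?_⟩
  have := p.2.1
  rw [integral_add (integrable_of_mem_growthSpace φ.2 p.2) (integrable_const d),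
    integral_const, probReal_univ, one_smul, ← hφ]
  rfl

lemma exists_growthSpace_minorant [SecondCountableTopology Y] (hr : 0 < r)
    (hbot : ∀ p ∈ Pr r y₀, F p ≠ ⊥) (hconv : EConvexOn (Pr r y₀) F) (hlsc : LscWr1 r y₀ F)
    {p₀ : Measure Y} (hp₀ : p₀ ∈ Pr r y₀) {c : ℝ} (hc : (c : EReal) < F p₀) :
    ∃ φ ∈ growthSpace r y₀, c < ∫ x, φ x ∂p₀ ∧
      ∀ p ∈ Pr r y₀, ((∫ x, φ x ∂p : ℝ) : EReal) ≤ F p := by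
  have hup (x : GrowthDual r y₀) (t : ℝ) (hxt : (x, t) ∈ epigraph r y₀ F) (u : ℝ) (htu : t ≤ u) :
      (x, u) ∈ epigraph r y₀ F := by
    obtain ⟨p, hx, hp⟩ := hxt
    exact ⟨p, hx, hp.trans (EReal.coe_le_coe htu)⟩
  have hproper (x : GrowthDual r y₀) (t : ℝ) (hxt : (x, t) ∈ epigraph r y₀ F) :
      ∃ c, (x, c) ∉ closure (epigraph r y₀ F) := by
    obtain ⟨p, rfl, -⟩ := hxt
    obtain ⟨c, -, hc⟩ := EReal.lt_iff_exists_real_btwn.1 (bot_lt_iff_ne_bot.2 (hbot p p.2))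
    exact ⟨c, notMem_closure_epigraph hr hlsc p hc⟩
  have hminorant := exists_affine_minorant (E := GrowthDual r y₀) (convex_epigraph hconv) hup
    hproper (notMem_closure_epigraph hr hlsc ⟨p₀, hp₀⟩ hc)
  obtain ⟨m, d, hm, hm_le⟩ := hminorant
  obtain ⟨φ, hφ, hφm⟩ := exists_integral_eq_apply_integralFunctional_add m d
  refine ⟨φ, hφ, hm.trans_eq (hφm ⟨p₀, hp₀⟩).symm, fun p hp => ?_⟩
  refine EReal.le_of_forall_lt_iff_le.1 fun t ht => EReal.coe_le_coe ?_
  exact (hφm ⟨p, hp⟩).trans_le (hm_le (integralFunctional ⟨p, hp⟩) t ⟨⟨p, hp⟩, rfl, ht.le⟩)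

end Epigraph

section Intensity

variable {Y : Type*} [MeasurableSpace Y] [PseudoMetricSpace Y] [OpensMeasurableSpace Y] {r : ℝ}
  {y₀ : Y}

lemma lintegral_dist_rpow_le_Wr_rpow (hr : 0 < r) (p : Measure Y) :
    ∫⁻ x, ENNReal.ofReal (dist x y₀ ^ r) ∂p ≤ Wr r p (Measure.dirac y₀) ^ r := by
  rw [← ENNReal.rpow_inv_le_iff hr, ← one_div]
  refine le_iInf₂ fun π hπ => ?_
  have hsnd : ∀ᵐ z ∂π, dist z.2 y₀ = 0 := by
    have hmeas : MeasurableSet {y | dist y y₀ = 0} :=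
      (continuous_id.dist continuous_const).measurable (measurableSet_singleton 0)
    exact ae_of_ae_map measurable_snd.aemeasurable
      (hπ.2 ▸ (ae_dirac_iff hmeas).2 (dist_self y₀))
  rw [← hπ.1, lintegral_map measurable_dist_rpow.ennreal_ofReal measurable_fst]
  gcongr ?_ ^ _
  refine lintegral_mono_ae ?_
  filter_upwards [hsnd] with z hz
  gcongr
  simpa only [hz, add_zero] using dist_triangle z.1 z.2 y₀

lemma intensity_mem_Pr (hr : 0 < r) {Q : Measure (Measure Y)} (hQ : Q ∈ PrP r y₀) :
    intensity Q ∈ Pr r y₀ := by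
  obtain ⟨hQ_prob, hQ_Pr, hQ_moment⟩ := hQ
  refine ⟨⟨?_⟩, ?_⟩
  · rw [intensity, Measure.join_apply .univ]
    calc ∫⁻ p, p univ ∂Q = ∫⁻ _, 1 ∂Q :=
          lintegral_congr_ae (hQ_Pr.mono fun p hp => have := hp.1; measure_univ)
      _ = 1 := by simp
  · rw [FinMom, intensity, Measure.lintegral_join measurable_dist_rpow.ennreal_ofReal.aemeasurable]
    exact (lintegral_mono fun p => lintegral_dist_rpow_le_Wr_rpow hr p).trans_lt hQ_moment

end Intensity

end WOT

theorem statement12_general {Y : Type*} [MeasurableSpace Y] [PseudoMetricSpace Y]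
    [SecondCountableTopology Y] [OpensMeasurableSpace Y] {r : ℝ} (hr : 0 < r) {y₀ : Y}
    {F : Measure Y → EReal} (hbot : ∀ q ∈ Pr r y₀, F q ≠ ⊥) (hconv : EConvexOn (Pr r y₀) F)
    (hlsc : LscWr1 r y₀ F) {Q : Measure (Measure Y)} (hQ : Q ∈ PrP r y₀) :
    F (intensity Q) ≤ eInt F Q := by
  have hI := intensity_mem_Pr hr hQ
  refine EReal.ge_of_forall_gt_iff_ge.1 fun c hc => ?_
  obtain ⟨φ, hφ, hcφ, hφF⟩ := exists_growthSpace_minorant hr hbot hconv hlsc hI hc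
  have hφI : Integrable φ Q.join := integrable_of_mem_growthSpace hφ hI
  calc (c : EReal) ≤ (∫ y, φ y ∂Q.join : ℝ) := EReal.coe_le_coe hcφ.le
    _ = (∫ p, ∫ y, φ y ∂p ∂Q : ℝ) := by rw [integral_join hφ.1 hφI]
    _ = eInt (fun p => ((∫ y, φ y ∂p : ℝ) : EReal)) Q :=
        (eInt_coe (integrable_integral_of_integrable_join hφ.1 hφI)).symm
    _ ≤ eInt F Q := eInt_mono_ae (hQ.2.1.mono hφF)

/-- Jensen's inequality for convex lower semicontinuous functionals on
`𝒫_r(Y)` (Lemma `lem:Jensen` (a)). -/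
theorem statement12 {Y : Type*}
    [MeasurableSpace Y] [MetricSpace Y] [CompleteSpace Y] [SecondCountableTopology Y]
    [BorelSpace Y]
    (r : ℝ) (hr : 1 ≤ r) (y₀ : Y)
    (F : Measure Y → EReal) (hbot : ∀ q, F q ≠ ⊥)
    (hconv : EConvexOn (Pr r y₀) F) (hlsc : LscWr1 r y₀ F) :
    ∀ Q ∈ PrP r y₀, F (intensity Q) ≤ eInt F Q := fun _ =>
  statement12_general (zero_lt_one.trans_le hr) (fun q _ => hbot q) hconv hlsc
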